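/- arXiv:2306.15257 — 2 statements merged into one kernel-verified Lean document; each statement's English description precedes it below -/
import Mathlib

section
/- Let (Ω, 𝒜, μ) be a measure space, E a real inner product space, and p > 1 a real number. For v ∈ E write |v|^{p-2}v := ‖v‖^{p-2}v, with the convention |v|^{p-2}v = 0 when v = 0. Suppose (u_n) is a sequence of strongly measurable functions u_n : Ω → E and u : Ω → E is strongly measurable, such that u_n(x) → u(x) for μ-almost every x ∈ Ω, ∫_Ω ‖u‖^p dμ < ∞, and ∫_Ω ‖u_n‖^p dμ → ∫_Ω ‖u‖^p dμ. Then |u_n|^{p-2}u_n converges to |u|^{p-2}u in L^{p/(p-1)}(Ω, μ; E), i.e. ∫_Ω ‖ |u_n|^{p-2}u_n − |u|^{p-2}u ‖^{p/(p-1)} dμ → 0 as n → ∞. -/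
open MeasureTheory Filter Topology ENNReal Real

/-- Generalized dominated convergence with a convergent sequence of bounds and limit `0`. -/
theorem tendsto_lintegral_zero_of_le_of_tendsto_lintegral {Ω : Type*} [MeasurableSpace Ω]
    {μ : Measure Ω} {F G : ℕ → Ω → ℝ≥0∞} {g : Ω → ℝ≥0∞}
    (hF : ∀ n, Measurable (F n)) (hG : ∀ n, Measurable (G n)) (hFG : ∀ n x, F n x ≤ G n x)
    (hF_lim : ∀ᵐ x ∂μ, Tendsto (fun n => F n x) atTop (𝓝 0))
    (hG_lim : ∀ᵐ x ∂μ, Tendsto (fun n => G n x) atTop (𝓝 (g x)))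
    (hg : ∫⁻ x, g x ∂μ ≠ ∞)
    (hG_int : Tendsto (fun n => ∫⁻ x, G n x ∂μ) atTop (𝓝 (∫⁻ x, g x ∂μ))) :
    Tendsto (fun n => ∫⁻ x, F n x ∂μ) atTop (𝓝 0) := by
  have h_add (n : ℕ) : ∫⁻ x, F n x ∂μ + ∫⁻ x, (G n x - F n x) ∂μ = ∫⁻ x, G n x ∂μ := by
    rw [← lintegral_add_left (hF n)]
    exact lintegral_congr fun x => add_tsub_cancel_of_le (hFG n x)
  have h_le (n : ℕ) : ∫⁻ x, (G n x - F n x) ∂μ ≤ ∫⁻ x, G n x ∂μ :=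
    lintegral_mono fun x => tsub_le_self
  have h_fatou : ∫⁻ x, g x ∂μ ≤ liminf (fun n => ∫⁻ x, (G n x - F n x) ∂μ) atTop := by
    refine le_trans (lintegral_mono_ae ?_) (lintegral_liminf_le fun n => (hG n).sub (hF n))
    filter_upwards [hF_lim, hG_lim] with x hFx hGx
    have h := ENNReal.Tendsto.sub hGx hFx (Or.inr zero_ne_top)
    rw [tsub_zero] at h
    exact h.liminf_eq.ge
  have h_diff : Tendsto (fun n => ∫⁻ x, (G n x - F n x) ∂μ) atTop (𝓝 (∫⁻ x, g x ∂μ)) :=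
    tendsto_of_le_liminf_of_limsup_le h_fatou
      ((limsup_le_limsup (Eventually.of_forall h_le)).trans hG_int.limsup_eq.le)
  have h_sub := ENNReal.Tendsto.sub hG_int h_diff (Or.inl hg)
  rw [tsub_self] at h_sub
  refine h_sub.congr' ?_
  filter_upwards [h_diff.eventually_lt_const hg.lt_top] with n hn
  rw [← h_add n, ENNReal.add_sub_cancel_right hn.ne]

theorem norm_norm_rpow_sub_two_smul {E : Type*} [NormedAddCommGroup E] [NormedSpace ℝ E]
    {p : ℝ} (hp : 1 < p) (v : E) : ‖‖v‖ ^ (p - 2) • v‖ = ‖v‖ ^ (p - 1) := by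
  rcases eq_or_ne v 0 with rfl | hv
  · simp [Real.zero_rpow (sub_pos.2 hp).ne']
  · rw [norm_smul, Real.norm_of_nonneg (by positivity),
      ← Real.rpow_add_one (norm_ne_zero_iff.2 hv)]
    congr 1
    ring

theorem continuous_norm_rpow_sub_two_smul {E : Type*} [NormedAddCommGroup E] [NormedSpace ℝ E]
    {p : ℝ} (hp : 1 < p) : Continuous fun v : E => ‖v‖ ^ (p - 2) • v := by
  refine continuous_iff_continuousAt.2 fun v => ?_
  rcases eq_or_ne v 0 with rfl | hv
  · rw [ContinuousAt, smul_zero, tendsto_zero_iff_norm_tendsto_zero]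
    simp_rw [norm_norm_rpow_sub_two_smul hp]
    have h : Continuous fun v : E => ‖v‖ ^ (p - 1) :=
      continuous_norm.rpow_const fun _ => Or.inr (sub_pos.2 hp).le
    simpa [Real.zero_rpow (sub_pos.2 hp).ne'] using h.tendsto 0
  · exact (continuous_norm.continuousAt.rpow_const (Or.inl (norm_ne_zero_iff.2 hv))).smul
      continuousAt_id

theorem enorm_norm_rpow_sub_two_smul_rpow {E : Type*} [NormedAddCommGroup E] [NormedSpace ℝ E]
    {p : ℝ} (hp : 1 < p) (v : E) : ‖‖v‖ ^ (p - 2) • v‖ₑ ^ (p / (p - 1)) = ‖v‖ₑ ^ p := by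
  have hp' : 0 < p - 1 := sub_pos.2 hp
  rw [← ofReal_norm, norm_norm_rpow_sub_two_smul hp,
    ← ENNReal.ofReal_rpow_of_nonneg (norm_nonneg v) hp'.le, ofReal_norm, ← ENNReal.rpow_mul,
    mul_div_cancel₀ _ hp'.ne']

/-- Key analytic step of Lemma 2.7 of the paper: if `uₙ → u` a.e. and
`∫ ‖uₙ‖^p → ∫ ‖u‖^p < ∞`, then `|uₙ|^{p-2}uₙ → |u|^{p-2}u` in `L^{p/(p-1)}`.
Here `|v|^{p-2}v` means `‖v‖^(p-2) • v`, which is `0` when `v = 0`. -/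
theorem stmt1 {Ω : Type*} [MeasurableSpace Ω] (μ : Measure Ω)
    {E : Type*} [NormedAddCommGroup E] [InnerProductSpace ℝ E]
    (p : ℝ) (hp : 1 < p)
    (u : ℕ → Ω → E) (u₀ : Ω → E)
    (hu : ∀ n, StronglyMeasurable (u n)) (hu₀ : StronglyMeasurable u₀)
    (hconv : ∀ᵐ x ∂μ, Tendsto (fun n => u n x) atTop (𝓝 (u₀ x)))
    (hfin : ∫⁻ x, (‖u₀ x‖₊ : ℝ≥0∞) ^ p ∂μ ≠ ∞)
    (hint : Tendsto (fun n => ∫⁻ x, (‖u n x‖₊ : ℝ≥0∞) ^ p ∂μ) atTop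
      (𝓝 (∫⁻ x, (‖u₀ x‖₊ : ℝ≥0∞) ^ p ∂μ))) :
    Tendsto (fun n => ∫⁻ x,
        (‖(‖u n x‖ ^ (p - 2) • u n x) - (‖u₀ x‖ ^ (p - 2) • u₀ x)‖₊ : ℝ≥0∞) ^ (p / (p - 1)) ∂μ)
      atTop (𝓝 0) := by
  have hp' : 0 < p - 1 := sub_pos.2 hp
  have hq : 1 ≤ p / (p - 1) := (one_le_div hp').2 (by linarith)
  have hC : (2 : ℝ≥0∞) ^ (p / (p - 1) - 1) ≠ ∞ :=
    ENNReal.rpow_ne_top_of_nonneg (sub_nonneg.2 hq) ofNat_ne_top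
  simp only [← enorm_eq_nnnorm] at hfin hint ⊢
  have h_meas (v : Ω → E) (hv : StronglyMeasurable v) : Measurable fun x => ‖v x‖ₑ ^ p :=
    hv.enorm.pow_const p
  have h_power (v : Ω → E) (hv : StronglyMeasurable v) :
      StronglyMeasurable fun x => ‖v x‖ ^ (p - 2) • v x :=
    (continuous_norm_rpow_sub_two_smul hp).comp_stronglyMeasurable hv
  refine tendsto_lintegral_zero_of_le_of_tendsto_lintegral
    (G := fun n x => 2 ^ (p / (p - 1) - 1) * (‖u n x‖ₑ ^ p + ‖u₀ x‖ₑ ^ p))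
    (g := fun x => 2 ^ (p / (p - 1) - 1) * (‖u₀ x‖ₑ ^ p + ‖u₀ x‖ₑ ^ p))
    (fun n => ((h_power _ (hu n)).sub (h_power _ hu₀)).enorm.pow_const _)
    (fun n => ((h_meas _ (hu n)).add (h_meas _ hu₀)).const_mul _) (fun n x => ?_) ?_ ?_ ?_ ?_
  · calc _ ≤ (‖‖u n x‖ ^ (p - 2) • u n x‖ₑ + ‖‖u₀ x‖ ^ (p - 2) • u₀ x‖ₑ) ^ (p / (p - 1)) :=
          ENNReal.rpow_le_rpow enorm_sub_le (by positivity)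
      _ ≤ _ := ENNReal.rpow_add_le_mul_rpow_add_rpow _ _ hq
      _ = _ := by simp only [enorm_norm_rpow_sub_two_smul_rpow hp]
  · filter_upwards [hconv] with x hx
    have h := (((continuous_norm_rpow_sub_two_smul hp).tendsto _).comp hx).sub_const
      (‖u₀ x‖ ^ (p - 2) • u₀ x)
    simpa [ENNReal.zero_rpow_of_pos (zero_lt_one.trans_le hq)] using
      h.enorm.ennrpow_const (p / (p - 1))
  · filter_upwards [hconv] with x hx
    exact ENNReal.Tendsto.const_mul ((hx.enorm.ennrpow_const p).add_const _) (Or.inr hC)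
  · rw [lintegral_const_mul' _ _ hC, lintegral_add_left (h_meas _ hu₀)]
    exact ENNReal.mul_ne_top hC (ENNReal.add_ne_top.2 ⟨hfin, hfin⟩)
  · simp_rw [lintegral_const_mul' _ _ hC, lintegral_add_right _ (h_meas _ hu₀)]
    exact ENNReal.Tendsto.const_mul (hint.add_const _) (Or.inr hC)
end

section
/- (Ljusternik–Schnirelman principle, existence part.) Let X be a reflexive real Banach space and F, G : X → ℝ functionals satisfying: (F1) F and G are even, of class C¹, and F(0) = G(0) = 0; (F2) F′ : X → X* is strongly continuous (it maps weakly convergent sequences to norm-convergent sequences), and if ψ lies in the closed convex hull of S_G := {ψ ∈ X : G(ψ) = 1} and ⟨F′(ψ), ψ⟩ = 0, then F(ψ) = 0; (F3) G′ : X → X* is continuous and bounded (maps bounded sets to bounded sets) and satisfies condition (S₀): if ψ_n ⇀ ψ weakly in X, G′(ψ_n) ⇀ v weakly in X*, and ⟨G′(ψ_n), ψ_n⟩ → ⟨v, ψ⟩, then ψ_n → ψ in norm; (F4) S_G is bounded, for every ψ ≠ 0 one has ⟨G′(ψ), ψ⟩ > 0 and G(tψ) → +∞ as t → +∞, and inf_{ψ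 ∈ S_G} ⟨G′(ψ), ψ⟩ > 0. For n ≥ 1 let A_n be the class of all compact symmetric subsets K of S_G with F(ψ) > 0 on K and genus γ(K) ≥ n, and set a_n = sup_{K ∈ A_n} inf_{ψ ∈ K} F(ψ) if A_n ≠ ∅ and a_n = 0 otherwise. Then for every n with a_n > 0 there exist ψ_n ∈ S_G and a real number μ_n ≠ 0 such that F′(ψ_n) = μ_n G′(ψ_n), F′(−ψ_n) = μ_n G′(−ψ_n), and F(ψ_n) = a_n. -/
open Filter Topology

/-- The level set `S_G = {ψ : G ψ = 1}`. -/
def levelSG {X : Type*} [NormedAddCommGroup X] [NormedSpace ℝ X] (G : X → ℝ) : Set X :=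
  {ψ : X | G ψ = 1}

/-- `GenusGe K n` says that the Krasnoselskii genus of `K` is at least `n`:
for no `k < n` does there exist a continuous odd map `K → ℝ^k ∖ {0}`. -/
def GenusGe {X : Type*} [NormedAddCommGroup X] [NormedSpace ℝ X]
    (K : Set X) (n : ℕ) : Prop :=
  ∀ k : ℕ, k < n → ¬ ∃ g : X → (Fin k → ℝ),
    ContinuousOn g K ∧ (∀ x ∈ K, g (-x) = -g x) ∧ (∀ x ∈ K, g x ≠ 0)

/-- The class `A_n` of all compact symmetric subsets `K` of `S_G` on which
`F > 0` and with genus `γ(K) ≥ n`. -/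
def LSFamily {X : Type*} [NormedAddCommGroup X] [NormedSpace ℝ X]
    (F G : X → ℝ) (n : ℕ) : Set (Set X) :=
  {K : Set X | K ⊆ levelSG G ∧ IsCompact K ∧ K = -K ∧ (∀ ψ ∈ K, 0 < F ψ) ∧ GenusGe K n}

/-- The Ljusternik–Schnirelman levels `a_n = sup_{K ∈ A_n} inf_{ψ ∈ K} F ψ`
(equal to `0` when `A_n = ∅`, since `sSup ∅ = 0` in `ℝ`). -/
noncomputable def LSLevel {X : Type*} [NormedAddCommGroup X] [NormedSpace ℝ X]
    (F G : X → ℝ) (n : ℕ) : ℝ :=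
  sSup ((fun K => sInf (F '' K)) '' LSFamily F G n)

/-- Bounded sequences in a reflexive space have weakly convergent subsequences. -/
theorem exists_subseq_tendsto_weak_of_reflexive {X : Type*} [NormedAddCommGroup X]
    [NormedSpace ℝ X] (hrefl : Function.Surjective (NormedSpace.inclusionInDoubleDual ℝ X))
    (x : ℕ → X) (hx : Bornology.IsBounded (Set.range x)) :
    ∃ x₀ : X, ∃ θ : ℕ → ℕ, StrictMono θ ∧
      ∀ f : X →L[ℝ] ℝ, Tendsto (fun n => f (x (θ n))) atTop (𝓝 (f x₀)) := by
  set Y : Submodule ℝ X := Submodule.span ℝ (Set.range x) with hY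
  set S : Set (WeakSpace ℝ X) := toWeakSpace ℝ X '' Set.range x with hS
  have hcpt : IsCompact (closure S) := by
    refine NormedSpace.isCompact_closure_of_isBounded ℝ X S ?_ ?_
    · rwa [hS, Set.preimage_image_eq _ (toWeakSpace ℝ X).injective]
    · intro f _
      obtain ⟨y, hy⟩ := hrefl (WeakDual.toStrongDual f)
      refine ⟨toWeakSpace ℝ X y, ?_⟩
      refine DFunLike.ext _ _ fun g => ?_
      exact congrArg (fun φ : StrongDual ℝ (StrongDual ℝ X) => φ g) hy
  have hsub : closure S ⊆ toWeakSpace ℝ X '' closure (Y : Set X) := by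
    rw [Y.convex.toWeakSpace_closure ℝ]
    exact closure_mono (Set.image_mono Submodule.subset_span)
  have hsep : TopologicalSpace.IsSeparable (closure (Y : Set X)) :=
    ((Set.countable_range x).isSeparable.span (R := ℝ)).closure
  obtain ⟨d, hd, hdY⟩ := hsep
  rcases d.eq_empty_or_nonempty with hd0 | hdne
  · have h0 := hdY (subset_closure Y.zero_mem)
    simp [hd0] at h0
  obtain ⟨y, rfl⟩ := hd.exists_eq_range hdne
  choose f hf1 hf2 using fun n => exists_dual_vector'' ℝ (y n)
  have hzero : ∀ z ∈ closure (Y : Set X), (∀ n, f n z = 0) → z = 0 := by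
    intro z hz hfz
    rw [← norm_le_zero_iff]
    refine le_of_forall_pos_le_add fun ε hε => ?_
    obtain ⟨_, ⟨n, rfl⟩, hn⟩ := Metric.mem_closure_iff.1 (hdY hz) (ε / 2) (half_pos hε)
    have h1 : ‖y n‖ ≤ ‖y n - z‖ := by
      have h2 : f n (y n - z) = ‖y n‖ := by
        rw [map_sub, hfz, sub_zero, hf2]; simp
      calc ‖y n‖ = f n (y n - z) := h2.symm
        _ ≤ ‖f n (y n - z)‖ := le_abs_self _
        _ ≤ ‖f n‖ * ‖y n - z‖ := (f n).le_opNorm _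
        _ ≤ 1 * ‖y n - z‖ := by gcongr; exact hf1 n
        _ = _ := one_mul _
    have h3 : ‖z‖ ≤ ‖y n‖ + ‖y n - z‖ := by
      simpa using norm_sub_le (y n) (y n - z)
    rw [dist_comm, dist_eq_norm] at hn
    linarith
  have : CompactSpace (closure S) := isCompact_iff_compactSpace.mp hcpt
  have hcont : ∀ g : X →L[ℝ] ℝ,
      Continuous fun w : WeakSpace ℝ X => g ((toWeakSpace ℝ X).symm w) :=
    fun g => WeakBilin.eval_continuous (topDualPairing ℝ X).flip g
  have hmet : TopologicalSpace.MetrizableSpace (closure S) := by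
    refine Metric.PiNatEmbed.TopologicalSpace.MetrizableSpace.of_countable_separating
      (fun n (w : closure S) => f n ((toWeakSpace ℝ X).symm w))
      (fun n => (hcont (f n)).comp continuous_subtype_val) ?_
    intro u w huw
    contrapose! huw
    obtain ⟨u', hu', hu⟩ := hsub u.2
    obtain ⟨w', hw', hw⟩ := hsub w.2
    have h0 : u' - w' = 0 := by
      refine hzero _ ?_ fun n => ?_
      · have := (Y.topologicalClosure).sub_mem (x := u') (y := w') hu' hw'
        exact this
      · have := huw n
        simp only [← hu, ← hw, LinearEquiv.symm_apply_apply] at this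
        rw [map_sub, this, sub_self]
    ext
    rw [← hu, ← hw, sub_eq_zero.1 h0]
  obtain ⟨w, θ, hθ, hlim⟩ := SeqCompactSpace.tendsto_subseq
    (fun n => (⟨toWeakSpace ℝ X (x n), subset_closure ⟨_, ⟨n, rfl⟩, rfl⟩⟩ : closure S))
  refine ⟨(toWeakSpace ℝ X).symm w, θ, hθ, fun g => ?_⟩
  have := (((hcont g).comp continuous_subtype_val).tendsto w).comp hlim
  exact this

/-- Closed convex sets are weakly sequentially closed. -/
theorem Convex.mem_of_weak_tendsto {X : Type*} [NormedAddCommGroup X] [NormedSpace ℝ X]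
    {s : Set X} (hs : Convex ℝ s) (hsc : IsClosed s) {x : ℕ → X} {x₀ : X}
    (hx : ∀ n, x n ∈ s)
    (hlim : ∀ f : X →L[ℝ] ℝ, Tendsto (fun n => f (x n)) atTop (𝓝 (f x₀))) : x₀ ∈ s := by
  by_contra h
  obtain ⟨f, u, hu, hfs⟩ := geometric_hahn_banach_point_closed hs hsc h
  exact absurd (ge_of_tendsto' (hlim f) fun n => (hfs _ (hx n)).le) (not_le.2 hu)

theorem tendsto_apply_of_tendsto_of_weak_tendsto {X : Type*} [NormedAddCommGroup X]
    [NormedSpace ℝ X] {f : ℕ → X →L[ℝ] ℝ} {f₀ : X →L[ℝ] ℝ} {x : ℕ → X} {x₀ : X} {R : ℝ}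
    (hf : Tendsto f atTop (𝓝 f₀)) (hR : ∀ n, ‖x n‖ ≤ R)
    (hx : ∀ g : X →L[ℝ] ℝ, Tendsto (fun n => g (x n)) atTop (𝓝 (g x₀))) :
    Tendsto (fun n => f n (x n)) atTop (𝓝 (f₀ x₀)) := by
  have h1 : Tendsto (fun n => (f n - f₀) (x n)) atTop (𝓝 0) := by
    have h2 : Tendsto (fun n => ‖f n - f₀‖ * R) atTop (𝓝 0) := by
      simpa using (tendsto_iff_norm_sub_tendsto_zero.1 hf).mul_const R
    refine squeeze_zero_norm (fun n => ?_) h2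
    exact ((f n - f₀).le_opNorm _).trans (by gcongr; exact hR n)
  simpa using h1.add (hx f₀)

/-- Ekeland's variational principle, for maximization. -/
theorem exists_forall_le_add_mul_dist {α : Type*} [MetricSpace α] [CompleteSpace α]
    {Φ : α → ℝ} (hΦ : UpperSemicontinuous Φ) (hbdd : BddAbove (Set.range Φ)) (x₀ : α)
    {ε : ℝ} (hε : 0 < ε) :
    ∃ x, Φ x₀ ≤ Φ x ∧ ∀ y, Φ y ≤ Φ x + ε * dist x y := by
  set S : α → Set α := fun x => {y | Φ x + ε * dist x y ≤ Φ y} with hS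
  have hself : ∀ x, x ∈ S x := fun x => by simp [hS]
  have htrans : ∀ {x y z}, y ∈ S x → z ∈ S y → z ∈ S x := by
    intro x y z hy hz
    have := mul_le_mul_of_nonneg_left (dist_triangle x y z) hε.le
    simp only [hS, Set.mem_ofPred_eq] at hy hz ⊢
    linarith
  have hbS : ∀ x, BddAbove (Φ '' S x) := fun x => hbdd.mono (Set.image_subset_range _ _)
  have hnext : ∀ (n : ℕ) (x : α), ∃ y ∈ S x, sSup (Φ '' S x) - (1 / 2 : ℝ) ^ n < Φ y := by
    intro n x
    obtain ⟨_, ⟨y, hy, rfl⟩, hlt⟩ := exists_lt_of_lt_csSup (s := Φ '' S x)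
      ⟨_, _, hself x, rfl⟩ (sub_lt_self _ (by positivity : (0 : ℝ) < (1 / 2) ^ n))
    exact ⟨y, hy, hlt⟩
  choose next hmem hlt using hnext
  let u : ℕ → α := fun n => Nat.rec x₀ (fun n x => next n x) n
  have hu : ∀ n, u (n + 1) = next n (u n) := fun n => rfl
  have hle : ∀ {m n}, m ≤ n → u n ∈ S (u m) := by
    intro m n hmn
    induction n, hmn using Nat.le_induction with
    | base => exact hself _
    | succ n _ ih => exact htrans ih (hu n ▸ hmem n (u n))
  have hsmall : ∀ n, ∀ y ∈ S (u (n + 1)), ε * dist (u (n + 1)) y ≤ (1 / 2 : ℝ) ^ n := by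
    intro n y hy
    have h1 : Φ y ≤ sSup (Φ '' S (u n)) :=
      le_csSup (hbS _) ⟨y, htrans (hle n.le_succ) hy, rfl⟩
    have h2 := hlt n (u n)
    rw [← hu] at h2
    simp only [hS, Set.mem_ofPred_eq] at hy
    linarith
  have hpow : Tendsto (fun n : ℕ => (1 / 2 : ℝ) ^ n / ε) atTop (𝓝 0) := by
    simpa using (tendsto_pow_atTop_nhds_zero_of_lt_one (r := (1 / 2 : ℝ))
      (by norm_num) (by norm_num)).div_const ε
  have hdist : ∀ n, ∀ y ∈ S (u (n + 1)), dist (u (n + 1)) y ≤ (1 / 2 : ℝ) ^ n / ε := by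
    intro n y hy
    rw [le_div_iff₀ hε, mul_comm]
    exact hsmall n y hy
  have hcauchy : CauchySeq fun n => u (n + 1) :=
    cauchySeq_of_le_tendsto_0' _ (fun n m hnm => hdist n _ (hle (Nat.succ_le_succ hnm))) hpow
  obtain ⟨x, hx⟩ := cauchySeq_tendsto_of_complete hcauchy
  have hclosed : ∀ y, IsClosed (S y) := by
    intro y
    have : UpperSemicontinuous fun z => Φ z + -(ε * dist y z) :=
      hΦ.add (Continuous.upperSemicontinuous (by fun_prop))
    have h2 := this.isClosed_preimage (Φ y)
    convert h2 using 1
    ext z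
    simp only [hS, Set.mem_ofPred_eq, Set.mem_preimage, Set.mem_Ici]
    constructor <;> intro h <;> linarith
  have hxS : ∀ n, x ∈ S (u n) := fun n =>
    (hclosed _).mem_of_tendsto hx (eventually_atTop.2 ⟨n, fun m hm => hle (Nat.le_succ_of_le hm)⟩)
  refine ⟨x, ?_, fun y => ?_⟩
  · have := hxS 0
    have h2 : 0 ≤ ε * dist x₀ x := by positivity
    change Φ x₀ + ε * dist x₀ x ≤ Φ x at this
    linarith
  · by_contra! hy
    have hyS : y ∈ S x := hy.le
    have hyx : Tendsto (fun n => u (n + 1)) atTop (𝓝 y) :=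
      tendsto_iff_dist_tendsto_zero.2 (squeeze_zero (fun _ => dist_nonneg)
        (fun n => hdist n y (htrans (hxS (n + 1)) hyS)) hpow)
    obtain rfl := tendsto_nhds_unique hx hyx
    simp at hy

/-- A continuous odd field along which a field of functionals is large on `C`. -/
theorem exists_odd_continuous_lt_apply {X : Type*} [NormedAddCommGroup X] [NormedSpace ℝ X]
    {T : X → X →L[ℝ] ℝ} {C : Set X} (hC : IsClosed C) (hCneg : ∀ x ∈ C, -x ∈ C)
    (hT : ∀ x ∈ C, ContinuousAt T x) (hTneg : ∀ x ∈ C, T (-x) = -T x) {η : ℝ}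
    (hη : ∀ x ∈ C, η < ‖T x‖) :
    ∃ v : C(X, X), (∀ x, v (-x) = -v x) ∧ (∀ x, ‖v x‖ ≤ 1) ∧ ∀ x ∈ C, η < T x (v x) := by
  obtain ⟨g, hg⟩ := exists_continuous_forall_mem_convex_of_local_const
    (t := fun x => Metric.closedBall (0 : X) 1 ∩ {w | x ∈ C → η < T x w}) (by
      intro x
      refine (convex_closedBall _ _).inter ?_
      by_cases hx : x ∈ C
      · simpa [hx] using convex_halfSpace_gt (T x).toLinearMap.isLinear η
      · simp [hx, convex_univ]) (by
      intro x
      by_cases hx : x ∈ C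
      · obtain ⟨w, hw1, hw⟩ := (T x).exists_lt_apply_of_lt_opNorm (hη x hx)
        obtain ⟨c, hc1, hc⟩ : ∃ c : X, ‖c‖ ≤ 1 ∧ η < T x c := by
          rcases le_total 0 (T x w) with h | h
          · exact ⟨w, hw1.le, by rwa [Real.norm_of_nonneg h] at hw⟩
          · exact ⟨-w, by simpa using hw1.le, by rwa [Real.norm_of_nonpos h, ← map_neg] at hw⟩
        refine ⟨c, ?_⟩
        have hcont : ContinuousAt (fun y => T y c) x := (hT x hx).clm_apply continuousAt_const
        filter_upwards [hcont.eventually (lt_mem_nhds hc)] with y hy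
        exact ⟨by simpa using hc1, fun _ => hy⟩
      · refine ⟨0, ?_⟩
        filter_upwards [hC.isOpen_compl.mem_nhds hx] with y hy
        exact ⟨by simp, fun h => absurd h hy⟩)
  refine ⟨⟨fun x => (1 / 2 : ℝ) • (g x - g (-x)), by fun_prop⟩, fun x => ?_, fun x => ?_,
    fun x hx => ?_⟩
  · simp [← smul_neg]
  · have h1 : ‖g x‖ ≤ 1 := by simpa using (hg x).1
    have h2 : ‖g (-x)‖ ≤ 1 := by simpa using (hg (-x)).1
    have h3 := norm_sub_le (g x) (g (-x))
    simp only [ContinuousMap.coe_mk, norm_smul, Real.norm_eq_abs]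
    rw [abs_of_pos (by norm_num)]
    linarith
  · have h1 : η < T x (g x) := (hg x).2 hx
    have h2 : η < T (-x) (g (-x)) := (hg (-x)).2 (hCneg x hx)
    rw [hTneg x hx] at h2
    simp only [neg_apply] at h2
    simp only [ContinuousMap.coe_mk, map_smul, map_sub, smul_eq_mul]
    linarith

theorem HasStrictFDerivAt.eventually_norm_sub_smul_le {X Y : Type*} [NormedAddCommGroup X]
    [NormedSpace ℝ X] [NormedAddCommGroup Y] [NormedSpace ℝ Y] {f : X → Y} {A : X →L[ℝ] Y}
    {x₀ : X} (hf : HasStrictFDerivAt f A x₀) (v : C(X, X)) (hv : ∀ x, ‖v x‖ ≤ 1)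
    {c : ℝ} (hc : 0 < c) :
    ∀ᶠ p : ℝ × X in 𝓝 (0, x₀),
      ‖f (p.2 + p.1 • v p.2) - f p.2 - p.1 • A (v p.2)‖ ≤ c * |p.1| := by
  have hlim : Tendsto (fun p : ℝ × X => (p.2 + p.1 • v p.2, p.2)) (𝓝 (0, x₀)) (𝓝 (x₀, x₀)) := by
    have : Continuous fun p : ℝ × X => (p.2 + p.1 • v p.2, p.2) := by fun_prop
    simpa using this.tendsto (0, x₀)
  filter_upwards [hlim.eventually (hf.isLittleO.bound hc)] with p hp
  simp only [add_sub_cancel_left, map_smul, norm_smul, Real.norm_eq_abs] at hp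
  refine hp.trans ?_
  gcongr
  exact mul_le_of_le_one_right (abs_nonneg _) (hv _)

/-- The radial projection onto the level set `G = 1` is odd, continuous away from `0`, and strictly
differentiable on the level set. -/
theorem exists_radial_retraction {X : Type*} [NormedAddCommGroup X] [NormedSpace ℝ X]
    [CompleteSpace X] {G : X → ℝ} {G' : X → X →L[ℝ] ℝ} (hGeven : ∀ x, G (-x) = G x)
    (hGderiv : ∀ x, HasFDerivAt G (G' x) x) (hG0 : G 0 = 0) (hGcont : Continuous G')
    (hGpos : ∀ x, x ≠ 0 → 0 < G' x x)
    (hGinfty : ∀ x, x ≠ 0 → Tendsto (fun t : ℝ => G (t • x)) atTop atTop) :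
    ∃ r : X → X, (∀ x, x ≠ 0 → G (r x) = 1) ∧ (∀ x, G x = 1 → r x = x) ∧
      (∀ x, r (-x) = -r x) ∧ (∀ x, x ≠ 0 → ContinuousAt r x) ∧
      ∀ x, G x = 1 → HasStrictFDerivAt r
        (ContinuousLinearMap.id ℝ X - (G' x).smulRight ((G' x x)⁻¹ • x)) x := by
  have hGc : Continuous G := continuous_iff_continuousAt.2 fun x => (hGderiv x).continuousAt
  have hstrict : ∀ x, HasStrictFDerivAt G (G' x) x := fun x =>
    hasStrictFDerivAt_of_hasFDerivAt_of_continuousAt (Eventually.of_forall hGderiv)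
      hGcont.continuousAt
  have hmono : ∀ x, x ≠ 0 → StrictMonoOn (fun t : ℝ => G (t • x)) (Set.Ici 0) := by
    intro x hx
    refine strictMonoOn_of_deriv_pos (convex_Ici 0) (by fun_prop) fun t ht => ?_
    rw [interior_Ici, Set.mem_Ioi] at ht
    have hd : HasDerivAt (fun t : ℝ => G (t • x)) (G' (t • x) ((1 : ℝ) • x)) t :=
      (hGderiv (t • x)).comp_hasDerivAt t ((hasDerivAt_id t).smul_const x)
    rw [hd.deriv, one_smul]
    have h1 := hGpos (t • x) (smul_ne_zero ht.ne' hx)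
    rw [map_smul, smul_eq_mul] at h1
    exact pos_of_mul_pos_right h1 ht.le
  have hex : ∀ x : X, ∃ t : ℝ, x ≠ 0 → 0 < t ∧ G (t • x) = 1 := by
    intro x
    by_cases hx : x = 0
    · exact ⟨0, fun h => absurd hx h⟩
    obtain ⟨b, hb1, hb0⟩ := (((hGinfty x hx).eventually_ge_atTop 1).and
      (eventually_ge_atTop (0 : ℝ))).exists
    obtain ⟨t, ht, hGt⟩ := intermediate_value_Icc hb0
      (f := fun t : ℝ => G (t • x)) (by fun_prop) (show (1 : ℝ) ∈ _ by simp [hG0, hb1])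
    refine ⟨t, fun _ => ⟨lt_of_le_of_ne ht.1 ?_, hGt⟩⟩
    rintro rfl
    simp [hG0] at hGt
  choose t ht using hex
  have huniq : ∀ x, x ≠ 0 → ∀ s : ℝ, 0 < s → G (s • x) = 1 → t x = s := by
    intro x hx s hs hGs
    exact (hmono x hx).injOn (ht x hx).1.le hs.le ((ht x hx).2.trans hGs.symm)
  have hne : ∀ x, G x = 1 → x ≠ 0 := by
    rintro x hx rfl
    rw [hG0] at hx
    norm_num at hx
  have hone : ∀ x, G x = 1 → t x = 1 := fun x hx =>
    huniq x (hne x hx) 1 one_pos (by rwa [one_smul])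
  have hderiv : ∀ x, x ≠ 0 → ∃ A : X →L[ℝ] ℝ, HasStrictFDerivAt t A x ∧
      ∀ w, G' (t x • x) (t x • w + A w • x) = 0 := by
    intro x hx
    have hprod : HasStrictFDerivAt (fun p : X × ℝ => G (p.2 • p.1)) _ (x, t x) :=
      (hstrict (t x • x)).comp (x, t x)
        ((hasStrictFDerivAt_snd (p := (x, t x))).smul (hasStrictFDerivAt_fst (p := (x, t x))))
    set D := (G' (t x • x)).comp
      ((x, t x).2 • ContinuousLinearMap.fst ℝ X ℝ +
        (ContinuousLinearMap.snd ℝ X ℝ).smulRight (x, t x).1) with hD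
    have hDapp : ∀ w s, D (w, s) = G' (t x • x) (t x • w + s • x) := fun w s => by simp [hD]
    have hpos : 0 < G' (t x • x) x := by
      have h1 := hGpos (t x • x) (smul_ne_zero (ht x hx).1.ne' hx)
      rw [map_smul, smul_eq_mul] at h1
      exact pos_of_mul_pos_right h1 (ht x hx).1.le
    have hinv : (D ∘L .inr ℝ X ℝ).IsInvertible := by
      refine ⟨ContinuousLinearEquiv.unitsEquivAut ℝ (Units.mk0 _ hpos.ne'), ?_⟩
      ext
      simp [hDapp]
    have hev : t =ᶠ[𝓝 x] hprod.implicitFunctionOfProdDomain hinv := by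
      have h1 := hprod.tendsto_implicitFunctionOfProdDomain hinv
      filter_upwards [hprod.eventually_apply_implicitFunctionOfProdDomain hinv,
        h1.eventually (lt_mem_nhds (ht x hx).1), isOpen_ne.mem_nhds hx] with y hy1 hy2 hy3
      exact huniq y hy3 _ hy2 (hy1.trans (ht x hx).2)
    refine ⟨_, (hprod.hasStrictFDerivAt_implicitFunctionOfProdDomain hinv).congr_of_eventuallyEq
      hev.symm, fun w => ?_⟩
    rw [← hDapp, ← D.comp_inl_add_comp_inr]
    simp [-ContinuousLinearMap.comp_apply, ContinuousLinearMap.coe_comp, map_neg, hinv]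
  refine ⟨fun x => t x • x, fun x hx => (ht x hx).2, fun x hx => ?_, fun x => ?_, fun x hx => ?_,
    fun x hx => ?_⟩
  · simp [hone x hx]
  · rcases eq_or_ne x 0 with rfl | hx
    · simp
    · have : t (-x) = t x := huniq _ (neg_ne_zero.2 hx) _ (ht x hx).1
        (by rw [smul_neg, hGeven]; exact (ht x hx).2)
      simp [this]
  · obtain ⟨A, hA, -⟩ := hderiv x hx
    exact hA.continuousAt.smul continuousAt_id
  · obtain ⟨A, hA, hA'⟩ := hderiv x (hne x hx)
    refine (hA.smul (hasStrictFDerivAt_id x)).congr_fderiv ?_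
    ext w
    have h1 := hA' w
    have h2 := hGpos x (hne x hx)
    simp only [hone x hx, one_smul, map_add, map_smul, smul_eq_mul] at h1
    have h3 : A w = -(G' x w * (G' x x)⁻¹) := by
      field_simp
      linarith
    simp [hone x hx, h3, smul_smul]
    abel

/-- The continuous odd maps from `K` into the level set `S_G`. -/
def oddMaps {X : Type*} [NormedAddCommGroup X] [NormedSpace ℝ X] (G : X → ℝ) (K : Set X) :
    Set C(K, X) :=
  {h | (∀ k, h k ∈ levelSG G) ∧ ∀ k k' : K, (k' : X) = -k → h k' = -h k}

theorem isClosed_oddMaps {X : Type*} [NormedAddCommGroup X] [NormedSpace ℝ X] {G : X → ℝ}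
    (hG : Continuous G) (K : Set X) : IsClosed (oddMaps G K) := by
  have heq : oddMaps G K = (⋂ k : K, {h : C(K, X) | G (h k) = 1}) ∩
      ⋂ (k : K) (k' : K) (_ : (k' : X) = -k), {h : C(K, X) | h k' = -h k} := by
    ext h
    simp [oddMaps, levelSG]
  rw [heq]
  refine (isClosed_iInter fun k => ?_).inter (isClosed_iInter fun k => isClosed_iInter fun k' =>
    isClosed_iInter fun _ => ?_)
  · exact isClosed_eq (by fun_prop) (by fun_prop)
  · exact isClosed_eq (by fun_prop) (by fun_prop)

theorem range_neg_mem_of_mem_oddMaps {X : Type*} [NormedAddCommGroup X] [NormedSpace ℝ X]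
    {G : X → ℝ} {K : Set X} (hK : K = -K) {h : C(K, X)} (hh : h ∈ oddMaps G K) :
    ∀ x ∈ Set.range h, -x ∈ Set.range h := by
  rintro _ ⟨k, rfl⟩
  have hk : -(k : X) ∈ K := Set.neg_mem_neg.1 (by simp [← hK])
  exact ⟨⟨_, hk⟩, hh.2 k ⟨_, hk⟩ rfl⟩

theorem range_mem_LSFamily {X : Type*} [NormedAddCommGroup X] [NormedSpace ℝ X] {F G : X → ℝ}
    {n : ℕ} {K : Set X} (hK : K ∈ LSFamily F G n) {h : C(K, X)} (hh : h ∈ oddMaps G K)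
    (hF : ∀ k, 0 < F (h k)) : Set.range h ∈ LSFamily F G n := by
  obtain ⟨-, hKc, hKs, -, hKg⟩ := hK
  have : CompactSpace K := isCompact_iff_compactSpace.1 hKc
  have hneg := range_neg_mem_of_mem_oddMaps hKs hh
  refine ⟨Set.range_subset_iff.2 hh.1, isCompact_range h.continuous, ?_,
    Set.forall_mem_range.2 hF, ?_⟩
  · ext x
    exact ⟨hneg x, fun hx => neg_neg x ▸ hneg _ hx⟩
  · classical
    rintro k hk ⟨g, hgc, hgodd, hg0⟩
    refine hKg k hk ⟨fun x => if hx : x ∈ K then g (h ⟨x, hx⟩) else 0, ?_, ?_, ?_⟩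
    · rw [continuousOn_iff_continuous_domRestrict]
      have heq : K.domRestrict (fun x => if hx : x ∈ K then g (h ⟨x, hx⟩) else 0) =
          fun x : K => g (h x) := by
        ext x
        simp
      rw [heq]
      exact hgc.comp_continuous h.continuous fun x => ⟨x, rfl⟩
    · intro x hx
      have hx' : -x ∈ K := by
        rw [hKs]
        simpa using hx
      simp only [hx, hx', dif_pos]
      rw [hh.2 ⟨x, hx⟩ ⟨-x, hx'⟩ rfl, hgodd _ ⟨_, rfl⟩]
    · intro x hx
      simpa only [hx, dif_pos] using hg0 _ ⟨_, rfl⟩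

/-- One step of the ascent along an odd field, uniformly on a compact set. -/
theorem eventually_ascent {X : Type*} [NormedAddCommGroup X] [NormedSpace ℝ X]
    {F : X → ℝ} {r : X → X} {T : X → X →L[ℝ] ℝ} {A : X → X →L[ℝ] X} {K : Set X} {L η m : ℝ}
    (hK : IsCompact K) (hK0 : (0 : X) ∉ K) (hr : ∀ x ∈ K, r x = x)
    (hrd : ∀ x ∈ K, HasStrictFDerivAt r (A x) x) (hA : ∀ x ∈ K, ‖A x‖ ≤ L)
    (hFr : ∀ x ∈ K, HasStrictFDerivAt (F ∘ r) (T x) x) (hm : ∀ x ∈ K, m ≤ F x)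
    {v : C(X, X)} (hv : ∀ x, ‖v x‖ ≤ 1) (hTv : ∀ x ∈ K, F x = m → η < T x (v x)) :
    ∀ᶠ s in 𝓝 (0 : ℝ), ∀ x ∈ K, 0 < s → x + s • v x ≠ 0 ∧
      ‖r (x + s • v x) - x‖ ≤ (L + 1) * s ∧ m + s * η ≤ F (r (x + s • v x)) := by
  suffices ∀ᶠ s in 𝓝 (0 : ℝ), ∀ x ∈ K, x ∈ K → 0 < s → x + s • v x ≠ 0 ∧
      ‖r (x + s • v x) - x‖ ≤ (L + 1) * s ∧ m + s * η ≤ F (r (x + s • v x)) from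
    this.mono fun s hs x hx => hs x hx hx
  refine hK.eventually_forall_of_forall_eventually
    (P := fun (s : ℝ) x => x ∈ K → 0 < s → x + s • v x ≠ 0 ∧
      ‖r (x + s • v x) - x‖ ≤ (L + 1) * s ∧ m + s * η ≤ F (r (x + s • v x))) fun x₀ hx₀ => ?_
  have hlim : Tendsto (fun p : ℝ × X => p.2 + p.1 • v p.2) (𝓝 (0, x₀)) (𝓝 x₀) := by
    have : Continuous fun p : ℝ × X => p.2 + p.1 • v p.2 := by fun_prop
    simpa using this.tendsto (0, x₀)
  have hne : ∀ᶠ p : ℝ × X in 𝓝 (0, x₀), p.2 + p.1 • v p.2 ≠ 0 :=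
    hlim.eventually (isOpen_ne.mem_nhds (ne_of_mem_of_not_mem hx₀ hK0))
  have hval : ∀ᶠ p : ℝ × X in 𝓝 (0, x₀), p.2 ∈ K → 0 < p.1 →
      m + p.1 * η ≤ F (r (p.2 + p.1 • v p.2)) := by
    rcases (hm x₀ hx₀).eq_or_lt with heq | hlt
    · have hgap := hTv x₀ hx₀ heq.symm
      set c := (T x₀ (v x₀) - η) / 2 with hc
      have hc0 : 0 < c := by linarith
      have hTc : ContinuousAt (fun p : ℝ × X => T x₀ (v p.2)) (0, x₀) := by fun_prop
      filter_upwards [(hFr x₀ hx₀).eventually_norm_sub_smul_le v hv hc0,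
        hTc.eventually (lt_mem_nhds (show η + c < T x₀ (v x₀) by linarith))] with p hp hpT hpK hp0
      rw [Real.norm_eq_abs, abs_of_pos hp0] at hp
      have h1 := (abs_le.1 hp).1
      simp only [Function.comp_apply, hr _ hpK, smul_eq_mul] at h1
      have h2 := hm _ hpK
      have h3 := mul_lt_mul_of_pos_left hpT hp0
      linarith
    · have h1 : Tendsto (fun p : ℝ × X => F (r (p.2 + p.1 • v p.2)) - p.1 * η) (𝓝 (0, x₀))
          (𝓝 (F x₀ - 0 * η)) := by
        refine Tendsto.sub ?_ ?_
        · have := (hFr x₀ hx₀).continuousAt.tendsto.comp hlim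
          simpa [Function.comp_def, hr x₀ hx₀] using this
        · exact (continuous_fst.tendsto (0, x₀)).mul_const η
      rw [zero_mul, sub_zero] at h1
      filter_upwards [h1.eventually (lt_mem_nhds hlt)] with p hp _ _
      linarith
  filter_upwards [hne, hval, (hrd x₀ hx₀).eventually_norm_sub_smul_le v hv one_pos]
    with p hp1 hp2 hp3 hpK hp0
  refine ⟨hp1, ?_, hp2 hpK hp0⟩
  rw [hr _ hpK, abs_of_pos hp0] at hp3
  have h1 : ‖p.1 • A x₀ (v p.2)‖ ≤ L * p.1 := by
    rw [norm_smul, Real.norm_eq_abs, abs_of_pos hp0, mul_comm]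
    gcongr
    exact ((A x₀).le_of_opNorm_le_of_le (hA x₀ hx₀) (hv _)).trans (mul_one L).le
  have h2 := norm_add_le (r (p.2 + p.1 • v p.2) - p.2 - p.1 • A x₀ (v p.2)) (p.1 • A x₀ (v p.2))
  rw [sub_add_cancel] at h2
  linarith

theorem fderiv_neg_of_even {X : Type*} [NormedAddCommGroup X] [NormedSpace ℝ X] {F : X → ℝ}
    {F' : X → X →L[ℝ] ℝ} (hF : ∀ x, F (-x) = F x) (hF' : ∀ x, HasFDerivAt F (F' x) x) (x : X) :
    F' (-x) = -F' x := by
  have h1 := (hF' (-x)).comp x (hasFDerivAt_id x).neg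
  have h2 : F ∘ Neg.neg = F := funext hF
  rw [h2] at h1
  have h3 := h1.unique (hF' x)
  rw [← h3]
  ext w
  simp

/-- The derivative of `F` along the level sets of `G`, extended by the Lagrange multiplier rule. -/
noncomputable def tangentialDeriv {X : Type*} [NormedAddCommGroup X] [NormedSpace ℝ X]
    (F' G' : X → X →L[ℝ] ℝ) (x : X) : X →L[ℝ] ℝ :=
  F' x - (F' x x / G' x x) • G' x

/-- Near the level `a_n > 0` there are points of `S_G` with arbitrarily small tangential derivative. -/
theorem exists_almost_critical {X : Type*} [NormedAddCommGroup X] [NormedSpace ℝ X]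
    [CompleteSpace X] {F G : X → ℝ} {F' G' : X → X →L[ℝ] ℝ}
    (hFeven : ∀ x, F (-x) = F x) (hGeven : ∀ x, G (-x) = G x)
    (hFderiv : ∀ x, HasFDerivAt F (F' x) x) (hFcont : Continuous F')
    (hGderiv : ∀ x, HasFDerivAt G (G' x) x) (hGcont : Continuous G') (hG0 : G 0 = 0)
    (hGpos : ∀ x, x ≠ 0 → 0 < G' x x)
    (hGinfty : ∀ x, x ≠ 0 → Tendsto (fun t : ℝ => G (t • x)) atTop atTop)
    {L : ℝ} (hL : ∀ x ∈ levelSG G,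
      ‖ContinuousLinearMap.id ℝ X - (G' x).smulRight ((G' x x)⁻¹ • x)‖ ≤ L)
    {n : ℕ} (hn : 1 ≤ n) (ha : 0 < LSLevel F G n) {ε : ℝ} (hε : 0 < ε) :
    ∃ x ∈ levelSG G, |F x - LSLevel F G n| ≤ ε ∧ ‖tangentialDeriv F' G' x‖ ≤ ε := by
  have hFc : Continuous F := continuous_iff_continuousAt.2 fun x => (hFderiv x).continuousAt
  have hGc : Continuous G := continuous_iff_continuousAt.2 fun x => (hGderiv x).continuousAt
  have hne : ∀ x ∈ levelSG G, x ≠ 0 := by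
    rintro x hx rfl
    exact zero_ne_one (hG0.symm.trans hx)
  have hbdd : BddAbove ((fun K => sInf (F '' K)) '' LSFamily F G n) := by
    by_contra h
    exact ha.ne' (Real.sSup_of_not_bddAbove h)
  have hnonempty : ((fun K => sInf (F '' K)) '' LSFamily F G n).Nonempty := by
    by_contra h
    rw [Set.not_nonempty_iff_eq_empty] at h
    rw [LSLevel, h, Real.sSup_empty] at ha
    exact ha.false
  obtain ⟨_, ⟨K, hK, rfl⟩, hKlt⟩ := exists_lt_of_lt_csSup hnonempty
    (sub_lt_self (LSLevel F G n) hε)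
  have hKc : CompactSpace K := isCompact_iff_compactSpace.1 hK.2.1
  have hKne : Nonempty K := by
    by_contra h
    rw [Set.nonempty_coe_sort, Set.not_nonempty_iff_eq_empty] at h
    exact hK.2.2.2.2 0 hn ⟨fun _ => 0, by simp [h]⟩
  have hL0 : 0 ≤ L := (norm_nonneg _).trans (hL _ (hK.1 (Classical.arbitrary K).2))
  set Φ : oddMaps G K → ℝ := fun h => sInf (F '' Set.range h.1) with hΦ
  have hcpt : ∀ h : oddMaps G K, IsCompact (F '' Set.range h.1) := fun h =>
    (isCompact_range h.1.continuous).image hFc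
  have hΦle : ∀ (h : oddMaps G K) (k : K), Φ h ≤ F (h.1 k) := fun h k =>
    csInf_le (hcpt h).bddBelow ⟨_, ⟨k, rfl⟩, rfl⟩
  have hle_Φ : ∀ (h : oddMaps G K) (c : ℝ), (∀ k, c ≤ F (h.1 k)) → c ≤ Φ h := fun h c hc =>
    le_csInf ((Set.range_nonempty _).image F) (by rintro _ ⟨_, ⟨k, rfl⟩, rfl⟩; exact hc k)
  have hΦa : ∀ h, Φ h ≤ LSLevel F G n := by
    intro h
    rcases le_or_gt (Φ h) 0 with h0 | h0
    · exact h0.trans ha.le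
    · exact le_csSup hbdd ⟨_, range_mem_LSFamily hK h.2 fun k => h0.trans_le (hΦle h k), rfl⟩
  have hΦusc : UpperSemicontinuous Φ := by
    intro h c hc
    obtain ⟨_, ⟨k, rfl⟩, hk⟩ := (hcpt h).sInf_mem ((Set.range_nonempty _).image F)
    have hk : F (h.1 k) < c := hk.trans_lt hc
    have hcont : Continuous fun h : oddMaps G K => F (h.1 k) :=
      hFc.comp ((continuous_eval_const k).comp continuous_subtype_val)
    filter_upwards [hcont.continuousAt.eventually (gt_mem_nhds hk)] with h' hh'
    exact (hΦle h' k).trans_lt hh'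
  have : CompleteSpace (oddMaps G K) := (isClosed_oddMaps hGc K).completeSpace_coe
  let h₀ : oddMaps G K := ⟨⟨Subtype.val, continuous_subtype_val⟩, fun k => hK.1 k.2,
    fun k k' hkk => hkk⟩
  obtain ⟨h, hh₀, hmax⟩ := exists_forall_le_add_mul_dist hΦusc
    ⟨_, Set.forall_mem_range.2 hΦa⟩ h₀ (show 0 < ε / (2 * (L + 1)) by positivity)
  have hΦ₀ : Φ h₀ = sInf (F '' K) := by
    simp only [hΦ, h₀]
    congr 2
    exact Subtype.range_val
  set K₁ : Set X := Set.range h.1 with hK₁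
  have hK₁c : IsCompact K₁ := isCompact_range h.1.continuous
  have hK₁G : ∀ x ∈ K₁, x ∈ levelSG G := Set.forall_mem_range.2 h.2.1
  have hK₁neg := range_neg_mem_of_mem_oddMaps hK.2.2.1 h.2
  set C : Set X := K₁ ∩ {x | F x = Φ h} with hC
  have hCclosed : IsClosed C := hK₁c.isClosed.inter (isClosed_eq hFc continuous_const)
  suffices ∃ x ∈ C, ‖tangentialDeriv F' G' x‖ ≤ ε by
    obtain ⟨x, hx, hxT⟩ := this
    refine ⟨x, hK₁G x hx.1, ?_, hxT⟩
    have h1 : F x = Φ h := hx.2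
    have h2 := hΦa h
    rw [hΦ₀] at hh₀
    simp only at hKlt
    rw [h1, abs_le]
    constructor <;> linarith
  by_contra! hcon
  obtain ⟨r, hr1, hr2, hr3, hr4, hr5⟩ :=
    exists_radial_retraction hGeven hGderiv hG0 hGcont hGpos hGinfty
  obtain ⟨v, hvodd, hv1, hvC⟩ := exists_odd_continuous_lt_apply (T := tangentialDeriv F' G')
    hCclosed (fun x hx => ⟨hK₁neg x hx.1, (hFeven x).trans hx.2⟩)
    (fun x hx => by
      have := (hGpos x (hne x (hK₁G x hx.1))).ne'
      unfold tangentialDeriv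
      fun_prop (disch := exact this))
    (fun x _ => by
      rw [tangentialDeriv, fderiv_neg_of_even hFeven hFderiv,
        fderiv_neg_of_even hGeven hGderiv, tangentialDeriv]
      simp
      abel) hcon
  have hFr : ∀ x ∈ K₁, HasStrictFDerivAt (F ∘ r) (tangentialDeriv F' G' x) x := by
    intro x hx
    have hstrict : HasStrictFDerivAt F (F' (r x)) (r x) :=
      hasStrictFDerivAt_of_hasFDerivAt_of_continuousAt (Eventually.of_forall hFderiv)
        hFcont.continuousAt
    refine (hstrict.comp x (hr5 x (hK₁G x hx))).congr_fderiv ?_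
    rw [hr2 x (hK₁G x hx)]
    ext w
    simp [tangentialDeriv]
    ring
  obtain ⟨s, hs, hs0⟩ := ((eventually_ascent hK₁c (fun h0 => hne 0 (hK₁G 0 h0) rfl)
    (fun x hx => hr2 x (hK₁G x hx)) (fun x hx => hr5 x (hK₁G x hx))
    (fun x hx => hL x (hK₁G x hx)) hFr (Set.forall_mem_range.2 (hΦle h)) hv1
    (fun x hx hxm => hvC x ⟨hx, hxm⟩)).filter_mono nhdsWithin_le_nhds |>.and
    (self_mem_nhdsWithin (s := Set.Ioi (0 : ℝ)))).exists
  have hs0 : 0 < s := hs0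
  have hsK := fun k : K => hs (h.1 k) ⟨k, rfl⟩ hs0
  let h₁ : oddMaps G K := ⟨⟨fun k => r (h.1 k + s • v (h.1 k)), by
      refine continuous_iff_continuousAt.2 fun k => ?_
      exact ContinuousAt.comp (f := fun k => h.1 k + s • v (h.1 k)) (hr4 _ (hsK k).1)
        (by fun_prop)⟩,
    fun k => hr1 _ (hsK k).1, fun k k' hkk => by
      simp only [ContinuousMap.coe_mk]
      rw [h.2.2 k k' hkk, hvodd, ← hr3]
      congr 1
      module⟩
  have hup : Φ h + s * ε ≤ Φ h₁ := hle_Φ _ _ fun k => (hsK k).2.2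
  have hdist : dist h h₁ ≤ (L + 1) * s := by
    rw [Subtype.dist_eq, ContinuousMap.dist_le (by positivity)]
    intro k
    rw [dist_comm, dist_eq_norm]
    exact (hsK k).2.1
  have h2 := hmax h₁
  have h3 : ε / (2 * (L + 1)) * dist h h₁ ≤ s * ε / 2 := by
    calc _ ≤ ε / (2 * (L + 1)) * ((L + 1) * s) := by gcongr
      _ = _ := by field_simp
  have := mul_pos hs0 hε
  linarith

/-- A functional with strongly continuous derivative is weakly sequentially continuous. -/
theorem tendsto_of_weak_tendsto_of_fderiv {X : Type*} [NormedAddCommGroup X] [NormedSpace ℝ X]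
    {F : X → ℝ} {F' : X → X →L[ℝ] ℝ} (hFderiv : ∀ x, HasFDerivAt F (F' x) x)
    (hFsc : ∀ (x : ℕ → X) (x₀ : X),
      (∀ f : X →L[ℝ] ℝ, Tendsto (fun n => f (x n)) atTop (𝓝 (f x₀))) →
      Tendsto (fun n => F' (x n)) atTop (𝓝 (F' x₀)))
    {x : ℕ → X} {x₀ : X} {R : ℝ} (hR : ∀ n, ‖x n‖ ≤ R)
    (hx : ∀ f : X →L[ℝ] ℝ, Tendsto (fun n => f (x n)) atTop (𝓝 (f x₀))) :
    Tendsto (fun n => F (x n)) atTop (𝓝 (F x₀)) := by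
  have hmv : ∀ n, ∃ c ∈ Set.Ioo (0 : ℝ) 1,
      F' (x₀ + c • (x n - x₀)) (x n - x₀) = F (x n) - F x₀ := by
    intro n
    have hd : ∀ c : ℝ, HasDerivAt (fun c : ℝ => F (x₀ + c • (x n - x₀)))
        (F' (x₀ + c • (x n - x₀)) ((1 : ℝ) • (x n - x₀))) c := fun c =>
      (hFderiv _).comp_hasDerivAt c (((hasDerivAt_id c).smul_const _).const_add _)
    obtain ⟨c, hc, h⟩ := exists_hasDerivAt_eq_slope _ _ (zero_lt_one' ℝ)
      (fun c _ => (hd c).continuousAt.continuousWithinAt) (fun c _ => hd c)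
    exact ⟨c, hc, by simpa using h⟩
  choose c hc hmv using hmv
  have hweak : ∀ f : X →L[ℝ] ℝ, Tendsto (fun n => f (x n - x₀)) atTop (𝓝 (f 0)) := by
    intro f
    simpa using (hx f).sub_const (f x₀)
  have hF' : Tendsto (fun n => F' (x₀ + c n • (x n - x₀))) atTop (𝓝 (F' x₀)) := by
    refine hFsc _ _ fun f => ?_
    have h1 : Tendsto (fun n => c n * f (x n - x₀)) atTop (𝓝 0) := by
      have h2 := hweak f
      rw [map_zero] at h2
      refine squeeze_zero_norm (fun n => ?_) (tendsto_zero_iff_norm_tendsto_zero.1 h2)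
      rw [norm_mul, Real.norm_eq_abs, abs_of_pos (hc n).1]
      exact mul_le_of_le_one_left (norm_nonneg _) (hc n).2.le
    simpa using h1.const_add (f x₀)
  have h3 := tendsto_apply_of_tendsto_of_weak_tendsto (R := R + ‖x₀‖) hF'
    (fun n => (norm_sub_le _ _).trans (by gcongr; exact hR n)) hweak
  simp only [hmv, map_zero] at h3
  simpa using h3.add_const (F x₀)

/-- The Palais–Smale condition at positive levels. -/
theorem exists_critical_of_tendsto {X : Type*} [NormedAddCommGroup X] [NormedSpace ℝ X]
    (hrefl : Function.Surjective (NormedSpace.inclusionInDoubleDual ℝ X))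
    {F G : X → ℝ} {F' G' : X → X →L[ℝ] ℝ}
    (hFderiv : ∀ x, HasFDerivAt F (F' x) x) (hGderiv : ∀ x, HasFDerivAt G (G' x) x)
    (hFsc : ∀ (x : ℕ → X) (x₀ : X),
      (∀ f : X →L[ℝ] ℝ, Tendsto (fun n => f (x n)) atTop (𝓝 (f x₀))) →
      Tendsto (fun n => F' (x n)) atTop (𝓝 (F' x₀)))
    (hF2 : ∀ x ∈ closure (convexHull ℝ (levelSG G)), F' x x = 0 → F x = 0)
    (hGcont : Continuous G')
    (hS0 : ∀ (x : ℕ → X) (x₀ : X) (v : X →L[ℝ] ℝ),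
      (∀ f : X →L[ℝ] ℝ, Tendsto (fun n => f (x n)) atTop (𝓝 (f x₀))) →
      (∀ y : X, Tendsto (fun n => G' (x n) y) atTop (𝓝 (v y))) →
      Tendsto (fun n => G' (x n) (x n)) atTop (𝓝 (v x₀)) →
      Tendsto x atTop (𝓝 x₀))
    {R B δ : ℝ} (hR : ∀ x ∈ levelSG G, ‖x‖ ≤ R) (hB : ∀ x ∈ levelSG G, ‖G' x‖ ≤ B)
    (hδ : 0 < δ) (hGinf : ∀ x ∈ levelSG G, δ ≤ G' x x)
    {a : ℝ} (ha : 0 < a) {x : ℕ → X} (hx : ∀ n, x n ∈ levelSG G)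
    (hFx : Tendsto (fun n => F (x n)) atTop (𝓝 a))
    (hTx : Tendsto (fun n => tangentialDeriv F' G' (x n)) atTop (𝓝 0)) :
    ∃ y ∈ levelSG G, ∃ μ : ℝ, μ ≠ 0 ∧ F' y = μ • G' y ∧ F y = a := by
  have hGc : Continuous G := continuous_iff_continuousAt.2 fun x => (hGderiv x).continuousAt
  obtain ⟨y, θ, hθ, hweak⟩ := exists_subseq_tendsto_weak_of_reflexive hrefl x
    ((Metric.isBounded_closedBall (x := (0 : X)) (r := R)).subset
      (Set.range_subset_iff.2 fun n => by simpa using hR _ (hx n)))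
  obtain ⟨c, hc, τ, hτ, hclim⟩ := tendsto_subseq_of_bounded (s := Set.Icc δ (B * R))
    (Metric.isBounded_Icc _ _) (x := fun n => G' (x (θ n)) (x (θ n))) (fun n =>
      ⟨hGinf _ (hx _), (le_abs_self _).trans
        ((G' _).le_of_opNorm_le_of_le (hB _ (hx _)) (hR _ (hx _)))⟩)
  rw [isClosed_Icc.closure_eq] at hc
  have hc0 : 0 < c := hδ.trans_le hc.1
  set z : ℕ → X := fun n => x (θ (τ n)) with hz
  have hzS : ∀ n, z n ∈ levelSG G := fun n => hx _
  have hzR : ∀ n, ‖z n‖ ≤ R := fun n => hR _ (hzS n)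
  have hzweak : ∀ f : X →L[ℝ] ℝ, Tendsto (fun n => f (z n)) atTop (𝓝 (f y)) := fun f =>
    (hweak f).comp hτ.tendsto_atTop
  have hsub : Tendsto (fun n => θ (τ n)) atTop atTop := hθ.tendsto_atTop.comp hτ.tendsto_atTop
  have hFy : F y = a := tendsto_nhds_unique
    (tendsto_of_weak_tendsto_of_fderiv hFderiv hFsc hzR hzweak) (hFx.comp hsub)
  have hycl : y ∈ closure (convexHull ℝ (levelSG G)) :=
    (convex_convexHull ℝ _).closure.mem_of_weak_tendsto isClosed_closure
      (fun n => subset_closure (subset_convexHull ℝ _ (hzS n))) hzweak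
  have hy0 : F' y y ≠ 0 := fun h => ha.ne' (hFy.symm.trans (hF2 y hycl h))
  have hF'lim := hFsc z y hzweak
  have hμlim : Tendsto (fun n => F' (z n) (z n) / G' (z n) (z n)) atTop (𝓝 (F' y y / c)) :=
    (tendsto_apply_of_tendsto_of_weak_tendsto hF'lim hzR hzweak).div hclim hc0.ne'
  set μ := F' y y / c with hμ
  have hμ0 : μ ≠ 0 := div_ne_zero hy0 hc0.ne'
  have hG'lim : Tendsto (fun n => G' (z n)) atTop (𝓝 (μ⁻¹ • F' y)) := by
    have h1 : Tendsto (fun n => (F' (z n) (z n) / G' (z n) (z n))⁻¹ •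
        (F' (z n) - tangentialDeriv F' G' (z n))) atTop (𝓝 (μ⁻¹ • (F' y - 0))) :=
      (hμlim.inv₀ hμ0).smul (hF'lim.sub (hTx.comp hsub))
    rw [sub_zero] at h1
    refine h1.congr' ?_
    filter_upwards [hμlim.eventually_ne hμ0] with n hn
    rw [tangentialDeriv, sub_sub_cancel, inv_smul_smul₀ hn]
  have hzy : Tendsto z atTop (𝓝 y) := by
    refine hS0 z y (μ⁻¹ • F' y) hzweak (fun w => ?_)
      (tendsto_apply_of_tendsto_of_weak_tendsto hG'lim hzR hzweak)
    exact ((ContinuousLinearMap.apply ℝ ℝ w).continuous.tendsto _).comp hG'lim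
  refine ⟨y, ?_, μ, hμ0, ?_, hFy⟩
  · exact (isClosed_eq hGc continuous_const).mem_of_tendsto hzy (Eventually.of_forall hzS)
  · rw [tendsto_nhds_unique ((hGcont.tendsto y).comp hzy) hG'lim, smul_inv_smul₀ hμ0]

/-- Ljusternik–Schnirelman principle, existence part (conclusion (1) of
Theorem 2.5 of the paper): under (F1)–(F4), for every `n ≥ 1` with `a_n > 0`
there are `ψ_n ∈ S_G` and `μ_n ≠ 0` with `F′(±ψ_n) = μ_n G′(±ψ_n)` and
`F(ψ_n) = a_n`. -/
theorem stmt14 {X : Type*} [NormedAddCommGroup X] [NormedSpace ℝ X] [CompleteSpace X]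
    (hrefl : Function.Surjective (NormedSpace.inclusionInDoubleDual ℝ X))
    (F G : X → ℝ) (F' G' : X → X →L[ℝ] ℝ)
    -- (F1)
    (hFeven : ∀ ψ : X, F (-ψ) = F ψ) (hGeven : ∀ ψ : X, G (-ψ) = G ψ)
    (hFderiv : ∀ ψ, HasFDerivAt F (F' ψ) ψ) (hFcont : Continuous F')
    (hGderiv : ∀ ψ, HasFDerivAt G (G' ψ) ψ)
    (hF0 : F 0 = 0) (hG0 : G 0 = 0)
    -- (F2): F' is strongly continuous
    (hFsc : ∀ (ψ : ℕ → X) (ψ₀ : X),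
      (∀ φ : X →L[ℝ] ℝ, Tendsto (fun n => φ (ψ n)) atTop (𝓝 (φ ψ₀))) →
      Tendsto (fun n => F' (ψ n)) atTop (𝓝 (F' ψ₀)))
    (hF2 : ∀ ψ ∈ closure (convexHull ℝ (levelSG G)), F' ψ ψ = 0 → F ψ = 0)
    -- (F3): G' is continuous, bounded and satisfies condition (S₀)
    (hGcont : Continuous G')
    (hGbdd : ∀ s : Set X, Bornology.IsBounded s →
      Bornology.IsBounded ((fun ψ => G' ψ) '' s))
    (hS0 : ∀ (ψ : ℕ → X) (ψ₀ : X) (v : X →L[ℝ] ℝ),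
      (∀ φ : X →L[ℝ] ℝ, Tendsto (fun n => φ (ψ n)) atTop (𝓝 (φ ψ₀))) →
      (∀ x : X, Tendsto (fun n => G' (ψ n) x) atTop (𝓝 (v x))) →
      Tendsto (fun n => G' (ψ n) (ψ n)) atTop (𝓝 (v ψ₀)) →
      Tendsto ψ atTop (𝓝 ψ₀))
    -- (F4)
    (hSGbdd : Bornology.IsBounded (levelSG G))
    (hGpos : ∀ ψ : X, ψ ≠ 0 → 0 < G' ψ ψ)
    (hGinfty : ∀ ψ : X, ψ ≠ 0 → Tendsto (fun t : ℝ => G (t • ψ)) atTop atTop)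
    (hGinf : ∃ δ : ℝ, 0 < δ ∧ ∀ ψ ∈ levelSG G, δ ≤ G' ψ ψ) :
    ∀ n : ℕ, 1 ≤ n → 0 < LSLevel F G n →
      ∃ ψ ∈ levelSG G, ∃ μ : ℝ, μ ≠ 0 ∧
        F' ψ = μ • G' ψ ∧ F' (-ψ) = μ • G' (-ψ) ∧ F ψ = LSLevel F G n := by
  intro n hn ha
  obtain ⟨δ, hδ, hδG⟩ := hGinf
  obtain ⟨R, hR⟩ := hSGbdd.exists_norm_le
  obtain ⟨B, hB⟩ := (hGbdd _ hSGbdd).exists_norm_le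
  replace hB : ∀ x ∈ levelSG G, ‖G' x‖ ≤ B := fun x hx => hB _ ⟨x, hx, rfl⟩
  have hL : ∀ x ∈ levelSG G,
      ‖ContinuousLinearMap.id ℝ X - (G' x).smulRight ((G' x x)⁻¹ • x)‖ ≤ 1 + B * (δ⁻¹ * R) := by
    intro x hx
    refine (norm_sub_le _ _).trans (add_le_add ContinuousLinearMap.norm_id_le ?_)
    have hB0 : 0 ≤ B := (norm_nonneg _).trans (hB x hx)
    have hpos : 0 < G' x x := hδ.trans_le (hδG x hx)
    rw [ContinuousLinearMap.norm_smulRight_apply, norm_smul, norm_inv, Real.norm_eq_abs,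
      abs_of_pos hpos]
    gcongr
    · exact hB x hx
    · exact hδG x hx
    · exact hR x hx
  choose x hxS hxF hxT using fun k : ℕ => exists_almost_critical hFeven hGeven hFderiv hFcont
    hGderiv hGcont hG0 hGpos hGinfty hL hn ha (Nat.one_div_pos_of_nat (α := ℝ) (n := k))
  obtain ⟨y, hy, μ, hμ, heq, hFy⟩ := exists_critical_of_tendsto hrefl hFderiv hGderiv hFsc hF2
    hGcont hS0 hR hB hδ hδG ha hxS
    (tendsto_iff_norm_sub_tendsto_zero.2
      (squeeze_zero (fun _ => norm_nonneg _) hxF tendsto_one_div_add_atTop_nhds_zero_nat))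
    (squeeze_zero_norm hxT tendsto_one_div_add_atTop_nhds_zero_nat)
  refine ⟨y, hy, μ, hμ, heq, ?_, hFy⟩
  rw [fderiv_neg_of_even hFeven hFderiv, fderiv_neg_of_even hGeven hGderiv, heq, smul_neg]
end
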